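/- arXiv:1606.05674 — 2 statements merged into one kernel-verified Lean document; each statement's English description precedes it below -/
import Mathlib

section
/- Let w, w_*, w_d ∈ [-1,1], let a, b ≥ 0 with a + b ≤ 1, let D ≥ 0, and let η ∈ ℝ satisfy |η|·D ≤ (1 - a - b)·(1 - |w|). Then the post-interaction opinion w' = w - a·(w - w_d) - b·(w - w_*) + η·D lies in [-1,1]. This is the bound-preservation property of the noisy binary opinion interaction rule. -/
/-- Bound preservation for the noisy binary opinion interaction rule: if the noise
satisfies `|η|·D ≤ (1 - a - b)(1 - |w|)` then the post-interaction opinion stays in `[-1,1]`. -/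
theorem stmt_2 (w wstar wd a b D η : ℝ)
    (hw : w ∈ Set.Icc (-1 : ℝ) 1) (hwstar : wstar ∈ Set.Icc (-1 : ℝ) 1)
    (hwd : wd ∈ Set.Icc (-1 : ℝ) 1)
    (ha : 0 ≤ a) (hb : 0 ≤ b) (hab : a + b ≤ 1) (hD : 0 ≤ D)
    (hη : |η| * D ≤ (1 - a - b) * (1 - |w|)) :
    w - a * (w - wd) - b * (w - wstar) + η * D ∈ Set.Icc (-1 : ℝ) 1 := by
  -- The new opinion is the convex combination `(1 - a - b) w + a wd + b wstar` plus `η D`;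
  -- the slack `(1 - a - b) (1 - |w|)` left by its first term absorbs the noise.
  have hc : 0 ≤ 1 - a - b := by linarith
  have h1 := mul_le_mul_of_nonneg_left (le_abs_self w) hc
  have h2 := mul_le_mul_of_nonneg_left (neg_abs_le w) hc
  have h3 := mul_le_mul_of_nonneg_right (le_abs_self η) hD
  have h4 := mul_le_mul_of_nonneg_right (neg_abs_le η) hD
  have h5 := mul_le_mul_of_nonneg_left hwd.1 ha
  have h6 := mul_le_mul_of_nonneg_left hwd.2 ha
  have h7 := mul_le_mul_of_nonneg_left hwstar.1 hb
  have h8 := mul_le_mul_of_nonneg_left hwstar.2 hb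
  constructor <;> linarith
end

section
/- Let λ > 0, σ > 0 and μ ∈ ℝ, and define g(x) = x^{-(2 + 2λ/σ²)} · exp(-2μ/(σ² x)) for x > 0. Then for every x > 0 the first-order flux identity (σ²/2)·d/dx( x²·g(x) ) = (μ - λx)·g(x) holds; consequently g is a stationary solution of the Fokker-Planck equation ∂/∂x[(-λx + μ) g] = (σ²/2) ∂²/∂x²( x² g ) on (0, ∞). -/
/-!
Writing `p = 2 + 2λ/σ²` and `E(x) = exp(-2μ/(σ²x))`, the product rule together with
`d/dx x^{-p} = -p x^{-p} / x` and `E'(x) = 2μ/(σ²x²) E(x)` gives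
`d/dx (x² g) = ((2 - p) x + 2μ/σ²) g = (2/σ²) (μ - λx) g` on `(0, ∞)`. Since `(0, ∞)` is open, this
identity holds near each of its points and can be differentiated once more, which is the
stationary equation.
-/

/-- The inverse-gamma-type density `g(x) = x^{-(2+2λ/σ²)} exp(-2μ/(σ²x))` satisfies on
`(0,∞)` the first-order flux identity `(σ²/2) d/dx(x² g) = (μ - λx) g`, and hence is a
stationary solution of the Fokker-Planck equation
`∂/∂x[(-λx + μ) g] = (σ²/2) ∂²/∂x²(x² g)`. -/
theorem stmt_12 (lam σ μ : ℝ) (hlam : 0 < lam) (hσ : 0 < σ)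
    (g : ℝ → ℝ)
    (hg : ∀ x : ℝ, 0 < x →
      g x = x ^ (-(2 + 2 * lam / σ ^ 2)) * Real.exp (-(2 * μ) / (σ ^ 2 * x))) :
    (∀ x : ℝ, 0 < x →
      HasDerivAt (fun y => σ ^ 2 / 2 * (y ^ 2 * g y)) ((μ - lam * x) * g x) x) ∧
    (∀ x : ℝ, 0 < x →
      deriv (fun y => (-lam * y + μ) * g y) x
        = deriv (fun y => deriv (fun z => σ ^ 2 / 2 * (z ^ 2 * g z)) y) x) := by
  have hflux : ∀ x : ℝ, 0 < x →
      HasDerivAt (fun y => σ ^ 2 / 2 * (y ^ 2 * g y)) ((μ - lam * x) * g x) x := by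
    intro x hx
    have hx0 : x ≠ 0 := hx.ne'
    have hσ0 : σ ≠ 0 := hσ.ne'
    have hpow : HasDerivAt (fun y : ℝ => y ^ (-(2 + 2 * lam / σ ^ 2)))
        (-(2 + 2 * lam / σ ^ 2) * (x ^ (-(2 + 2 * lam / σ ^ 2)) / x)) x := by
      have h := Real.hasDerivAt_rpow_const (x := x) (p := -(2 + 2 * lam / σ ^ 2)) (Or.inl hx0)
      rwa [Real.rpow_sub_one hx0] at h
    have harg : HasDerivAt (fun y : ℝ => -(2 * μ) / (σ ^ 2 * y))
        (2 * μ / (σ ^ 2 * x ^ 2)) x := by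
      have h := (hasDerivAt_const x (-(2 * μ))).fun_div ((hasDerivAt_id' x).const_mul (σ ^ 2))
        (mul_ne_zero (pow_ne_zero 2 hσ0) hx0)
      refine h.congr_deriv ?_
      field_simp
      ring
    have hsq : HasDerivAt (fun y : ℝ => y ^ 2) (2 * x) x := by
      simpa using hasDerivAt_pow 2 x
    have hmain := (hsq.fun_mul (hpow.fun_mul harg.exp)).const_mul (σ ^ 2 / 2)
    have hcongr : (fun y => σ ^ 2 / 2 * (y ^ 2 * g y)) =ᶠ[nhds x] fun y =>
        σ ^ 2 / 2 * (y ^ 2 *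
          (y ^ (-(2 + 2 * lam / σ ^ 2)) * Real.exp (-(2 * μ) / (σ ^ 2 * y)))) := by
      filter_upwards [Ioi_mem_nhds hx] with y hy
      rw [hg y hy]
    refine (hmain.congr_of_eventuallyEq hcongr).congr_deriv ?_
    rw [hg x hx]
    -- The power and the exponential are now common factors; the rest is a rational identity.
    generalize x ^ (-(2 + 2 * lam / σ ^ 2)) = P
    generalize Real.exp (-(2 * μ) / (σ ^ 2 * x)) = E
    field_simp
    ring
  refine ⟨hflux, fun x hx => Filter.EventuallyEq.deriv_eq ?_⟩
  filter_upwards [Ioi_mem_nhds hx] with y hy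
  rw [(hflux y hy).deriv]
  ring
end
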